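/- Let R be the quotient of ℂ⟨e1,e2,e3⟩ by the two-sided ideal generated by e1e2 + e2e1 − e3, e1e3 + e3e1 − e2, e2e3 − e3e2, e2², and e3². Then h_n = 1 for every n ≥ 0; equivalently, the Poincaré series Σ_{n≥0} h_n z^n equals 1/(1−z). -/

import Mathlib

open CategoryTheory FreeAlgebra

/-- `Ext^m_R(ℂ,ℂ)` as a ℂ-module, where `ℂ` is an `R`-module via the augmentation `ε`. -/
noncomputable def extC (R : Type) [Ring R] [Algebra ℂ R] (ε : R →ₐ[ℂ] ℂ) (m : ℕ) :
    ModuleCat ℂ :=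
  letI : Module R ℂ := Module.compHom ℂ ε.toRingHom
  ((Ext ℂ (ModuleCat R) m).obj (Opposite.op (ModuleCat.of R ℂ))).obj (ModuleCat.of R ℂ)

/-- `h_m = dim_ℂ Ext^m_R(ℂ,ℂ)`. -/
noncomputable def extDim (R : Type) [Ring R] [Algebra ℂ R] (ε : R →ₐ[ℂ] ℂ) (m : ℕ) : ℕ :=
  Module.finrank ℂ (extC R ε m)

/-- Relations: `e1e2 + e2e1 = e3`, `e1e3 + e3e1 = e2`, `e2e3 - e3e2 = 0`, `e2² = 0`, `e3² = 0`. -/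
inductive CRel : FreeAlgebra ℂ (Fin 3) → FreeAlgebra ℂ (Fin 3) → Prop
  | r12 : CRel (ι ℂ 0 * ι ℂ 1 + ι ℂ 1 * ι ℂ 0) (ι ℂ 2)
  | r13 : CRel (ι ℂ 0 * ι ℂ 2 + ι ℂ 2 * ι ℂ 0) (ι ℂ 1)
  | r23 : CRel (ι ℂ 1 * ι ℂ 2 - ι ℂ 2 * ι ℂ 1) 0
  | r22 : CRel (ι ℂ 1 * ι ℂ 1) 0
  | r33 : CRel (ι ℂ 2 * ι ℂ 2) 0

/-!
Put `x = e₁`, `u = e₂ + e₃`, `v = e₂ - e₃`. The relations become `xu + ux = u`, `xv + vx = -v`,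
`uv = vu = 0`, `u² + v² = 0`, and `R` is free over `ℂ[x]` on `1, u, v, u²`. The subalgebra generated
by `u` and `v` is Koszul, and its minimal resolution has bidiagonal differentials with entries `u`
and `v`. The `p`-th basis vector in degree `n` has weight `(-1)ⁿ(2p - n)` with respect to `x`, so
right multiplication by `x` minus the weight anticommutes with the differentials, and the cone of
this map is a free resolution of `ℂ` over `R`. Applying `Hom_R(-, ℂ)` kills every entry of the
differentials except the weights. The weights vanish only for `n = 2p`, so rank-nullity leaves
exactly one dimension in each degree.
-/

universe u

namespace ColorLie

open Matrix

/-! ### Complexes of modules and projective resolutions -/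

section ModuleComplexes

theorem finrank_homology_add_finrank_range {k : Type u} [Field k]
    (S : ShortComplex (ModuleCat.{u} k)) [Module.Finite k S.X₂] :
    Module.finrank k S.homology + Module.finrank k (LinearMap.range S.f.hom) +
      Module.finrank k (LinearMap.range S.g.hom) = Module.finrank k S.X₂ := by
  have homology_eq : Module.finrank k S.homology =
      Module.finrank k (LinearMap.ker S.g.hom ⧸ LinearMap.range S.moduleCatToCycles) :=
    S.moduleCatHomologyIso.toLinearEquiv.finrank_eq
  have boundaries_eq : Module.finrank k (LinearMap.range S.moduleCatToCycles) =
      Module.finrank k (LinearMap.range S.f.hom) := by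
    rw [(Submodule.equivMapOfInjective _ (LinearMap.ker S.g.hom).injective_subtype
      (LinearMap.range S.moduleCatToCycles)).finrank_eq, ← LinearMap.range_comp]
    rfl
  rw [homology_eq, ← boundaries_eq, Submodule.finrank_quotient_add_finrank, add_comm,
    LinearMap.finrank_range_add_finrank_ker]

theorem finrank_homology_zero_add_finrank_range {k : Type u} [Field k]
    (C : CochainComplex (ModuleCat.{u} k) ℕ) [hC : Module.Finite k (C.X 0)] :
    Module.finrank k (C.homology 0) + Module.finrank k (LinearMap.range (C.d 0 1).hom) =
      Module.finrank k (C.X 0) := by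
  have : Module.Finite k (C.sc' 0 0 1).X₂ := hC
  have incoming_eq_zero : (C.sc' 0 0 1).f = 0 := C.shape 0 0 (by simp)
  have range_incoming : Module.finrank k (LinearMap.range (C.sc' 0 0 1).f.hom) = 0 := by
    rw [incoming_eq_zero, ModuleCat.hom_zero, LinearMap.range_zero, finrank_bot]
  have homology_iso := ShortComplex.homologyMapIso (C.isoSc' 0 0 1 (by simp) (by simp))
  have euler := finrank_homology_add_finrank_range (C.sc' 0 0 1)
  rwa [← homology_iso.toLinearEquiv.finrank_eq, range_incoming, add_zero] at euler

theorem finrank_homology_succ_add_finrank_range {k : Type u} [Field k]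
    (C : CochainComplex (ModuleCat.{u} k) ℕ) (n : ℕ) [hC : Module.Finite k (C.X (n + 1))] :
    Module.finrank k (C.homology (n + 1)) +
        Module.finrank k (LinearMap.range (C.d n (n + 1)).hom) +
        Module.finrank k (LinearMap.range (C.d (n + 1) (n + 2)).hom) =
      Module.finrank k (C.X (n + 1)) := by
  have : Module.Finite k (C.sc' n (n + 1) (n + 2)).X₂ := hC
  have homology_iso :=
    ShortComplex.homologyMapIso (C.isoSc' n (n + 1) (n + 2) (by simp) (by simp))
  have euler := finrank_homology_add_finrank_range (C.sc' n (n + 1) (n + 2))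
  rwa [← homology_iso.toLinearEquiv.finrank_eq] at euler

variable {R : Type u} [Ring R] {P : ℕ → Type u} [∀ n, AddCommGroup (P n)] [∀ n, Module R (P n)]
  (d : ∀ n, P (n + 1) →ₗ[R] P n) (hd : ∀ n, Function.Exact (d (n + 1)) (d n))
  {N : ModuleCat.{u} R} (π : P 0 →ₗ[R] N) (hπ : Function.Exact (d 0) π)
  (π_surjective : Function.Surjective π)

/-- The chain complex of modules with the differentials `d` of an exact sequence `⋯ → P 2 → P 1 →
P 0`. -/
noncomputable def complexOfExact : ChainComplex (ModuleCat.{u} R) ℕ :=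
  ChainComplex.of (fun n => ModuleCat.of R (P n)) (fun n => ModuleCat.ofHom (d n))
    fun n => ModuleCat.hom_ext (hd n).linearMap_comp_eq_zero

theorem complexOfExact_d (n : ℕ) :
    (complexOfExact d hd).d (n + 1) n = ModuleCat.ofHom (d n) :=
  ChainComplex.of_d (fun n => ModuleCat.of R (P n)) (fun n => ModuleCat.ofHom (d n)) n

/-- The augmentation `P 0 → N` as a chain map from `⋯ → P 1 → P 0` to `N` in degree zero. -/
noncomputable def augmentationOfExact :
    complexOfExact d hd ⟶ (ChainComplex.single₀ (ModuleCat.{u} R)).obj N :=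
  (ChainComplex.toSingle₀Equiv _ _).symm ⟨ModuleCat.ofHom π, by
    rw [complexOfExact_d]
    exact ModuleCat.hom_ext hπ.linearMap_comp_eq_zero⟩

theorem augmentationOfExact_f_zero :
    (augmentationOfExact d hd π hπ).f 0 = ModuleCat.ofHom π :=
  ChainComplex.toSingle₀Equiv_symm_apply_f_zero _ _

include π_surjective in
theorem quasiIso_augmentationOfExact : QuasiIso (augmentationOfExact d hd π hπ) where
  quasiIsoAt n := by
    cases n with
    | zero =>
      rw [ChainComplex.quasiIsoAt₀_iff, ShortComplex.quasiIso_iff_of_zeros' _ rfl rfl rfl]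
      constructor
      · apply ModuleCat.shortComplex_exact
        change Function.Exact ((complexOfExact d hd).d 1 0) ((augmentationOfExact d hd π hπ).f 0)
        rw [complexOfExact_d, augmentationOfExact_f_zero]
        exact hπ
      · rw [ModuleCat.epi_iff_surjective]
        change Function.Surjective ((augmentationOfExact d hd π hπ).f 0)
        rw [augmentationOfExact_f_zero]
        exact π_surjective
    | succ n =>
      rw [quasiIsoAt_iff_exactAt' (hL := ChainComplex.exactAt_succ_single_obj ..),
        HomologicalComplex.exactAt_iff' _ (n + 2) (n + 1) n (by simp) (by simp)]
      apply ModuleCat.shortComplex_exact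
      change Function.Exact ((complexOfExact d hd).d (n + 2) (n + 1))
        ((complexOfExact d hd).d (n + 1) n)
      rw [complexOfExact_d, complexOfExact_d]
      exact hd n

/-- The projective resolution of `N` given by an exact sequence `⋯ → P 1 → P 0 → N → 0` of
projective modules. -/
noncomputable def projectiveResolutionOfExact [∀ n, Module.Projective R (P n)] :
    ProjectiveResolution N where
  complex := complexOfExact d hd
  projective n := inferInstanceAs (Projective (ModuleCat.of R (P n)))
  π := augmentationOfExact d hd π hπ
  quasiIso := quasiIso_augmentationOfExact d hd π hπ π_surjective

end ModuleComplexes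

/-! ### Ext of the trivial module from a resolution by matrices -/

section TrivialModule

open scoped ModuleCat

variable {k R : Type u} [Field k] [Ring R] [Algebra k R] (ε : R →ₐ[k] k)

/-- The field `k` as an `R`-module via the augmentation `ε`. -/
def trivialModule : ModuleCat.{u} R :=
  letI : Module R k := Module.compHom k ε.toRingHom
  ModuleCat.of R k

/-- The underlying `k`-vector space of the trivial module is `k`; the `k`-action on the left-hand
side is the one restricted along `k → R`. -/
noncomputable def trivialModuleEquiv : trivialModule ε ≃ₗ[k] k where
  toFun z := z
  invFun z := z
  map_add' _ _ := rfl
  map_smul' a z := congrArg (HMul.hMul (β := k) (γ := k) · z) (ε.commutes a)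

theorem trivialModuleEquiv_smul (r : R) (z : trivialModule ε) :
    trivialModuleEquiv ε (r • z) = ε r * trivialModuleEquiv ε z := rfl

variable {ι κ : Type} [Fintype ι] [Fintype κ]

/-- A homomorphism from a finite free module to the trivial module is given by its values on the
standard basis. -/
noncomputable def homTrivialModuleEquiv (ι : Type) [Fintype ι] :
    (ModuleCat.of R (ι → R) ⟶ trivialModule ε) ≃ₗ[k] (ι → k) :=
  ModuleCat.homLinearEquiv ≪≫ₗ ((Pi.basisFun R ι).constr k).symm ≪≫ₗ
    LinearEquiv.piCongrRight fun _ => trivialModuleEquiv ε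

theorem homTrivialModuleEquiv_apply [DecidableEq ι]
    (φ : ModuleCat.of R (ι → R) ⟶ trivialModule ε) (i : ι) :
    homTrivialModuleEquiv ε ι φ i = trivialModuleEquiv ε (φ (Pi.single i 1)) := by
  simp only [homTrivialModuleEquiv, LinearEquiv.trans_apply, LinearEquiv.piCongrRight_apply,
    Module.Basis.constr_symm_apply, Pi.basisFun_apply]
  rfl

theorem homTrivialModuleEquiv_comp_vecMul (M : Matrix κ ι R)
    (φ : ModuleCat.of R (ι → R) ⟶ trivialModule ε) :
    homTrivialModuleEquiv ε κ (ModuleCat.ofHom M.vecMulLinear ≫ φ) =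
      M.map ε *ᵥ homTrivialModuleEquiv ε ι φ := by
  classical
  ext j
  have row_eq_sum : M.row j = ∑ i, M j i • Pi.single i (1 : R) := by
    simp [← Pi.single_smul, Finset.univ_sum_single, Matrix.row_def]
  simp only [homTrivialModuleEquiv_apply, ModuleCat.hom_comp, ConcreteCategory.hom_ofHom,
    LinearMap.coe_comp, Function.comp_apply, LinearMap.flip_apply, vecMulBilin_apply,
    single_vecMul, one_smul]
  rw [row_eq_sum, map_sum, map_sum]
  simp [trivialModuleEquiv_smul, mulVec, dotProduct, homTrivialModuleEquiv_apply]

theorem finrank_range_leftComp_vecMul (M : Matrix κ ι R) :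
    Module.finrank k (LinearMap.range
      (Linear.leftComp k (trivialModule ε) (ModuleCat.ofHom M.vecMulLinear))) =
      (M.map ε).rank := by
  have conj : (homTrivialModuleEquiv ε κ).toLinearMap ∘ₗ
      Linear.leftComp k (trivialModule ε) (ModuleCat.ofHom M.vecMulLinear) =
      (M.map ε).mulVecLin ∘ₗ (homTrivialModuleEquiv ε ι).toLinearMap :=
    LinearMap.ext (homTrivialModuleEquiv_comp_vecMul ε M)
  rw [← (homTrivialModuleEquiv ε κ).finrank_map_eq, ← LinearMap.range_comp, conj,
    LinearMap.range_comp_of_range_eq_top _ (LinearEquiv.range _), Matrix.rank]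

end TrivialModule

section ExtOfMatrices

variable {k R : Type u} [Field k] [Ring R] [Algebra k R] {ε : R →ₐ[k] k}
  {ι : ℕ → Type} [∀ n, Fintype (ι n)] {M : ∀ n, Matrix (ι (n + 1)) (ι n) R}
  (hM : ∀ n, Function.Exact (M (n + 1)).vecMulLinear (M n).vecMulLinear)
  {π : (ι 0 → R) →ₗ[R] trivialModule ε} (hπ : Function.Exact (M 0).vecMulLinear π)
  (π_surjective : Function.Surjective π)

variable (ε) in
/-- The complex `Hom_R(P, k)` of an exact sequence `P` of finite free modules. The differentials
of `P` act on row vectors by right multiplication with the matrices `M n`. -/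
noncomputable def homComplex : CochainComplex (ModuleCat.{u} k) ℕ :=
  (complexOfExact (P := fun n => ι n → R) (fun n => (M n).vecMulLinear) hM).linearYonedaObj k
    (trivialModule ε)

/-- The identification of the terms of `homComplex` with coordinate spaces. -/
noncomputable def homComplexXEquiv (n : ℕ) : (homComplex ε hM).X n ≃ₗ[k] (ι n → k) :=
  homTrivialModuleEquiv ε (ι n)

theorem finrank_homComplex_X (n : ℕ) :
    Module.finrank k ((homComplex ε hM).X n) = Fintype.card (ι n) :=
  (homComplexXEquiv hM n).finrank_eq.trans (Module.finrank_fintype_fun_eq_card k)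

instance finite_homComplex_X (n : ℕ) : Module.Finite k ((homComplex ε hM).X n) :=
  Module.Finite.equiv (homComplexXEquiv hM n).symm

theorem finrank_range_homComplex_d (n : ℕ) :
    Module.finrank k (LinearMap.range ((homComplex ε hM).d n (n + 1)).hom) =
      ((M n).map ε).rank := by
  rw [← finrank_range_leftComp_vecMul, homComplex, ChainComplex.linearYonedaObj_d,
    complexOfExact_d]
  rfl

include π_surjective hπ in
theorem finrank_ext_eq_finrank_homology (n : ℕ) :
    Module.finrank k (((Ext k (ModuleCat R) n).obj (Opposite.op (trivialModule ε))).obj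
      (trivialModule ε)) = Module.finrank k ((homComplex ε hM).homology n) :=
  ((projectiveResolutionOfExact (P := fun n => ι n → R) _ hM π hπ π_surjective).isoExt n
    (trivialModule ε)).toLinearEquiv.finrank_eq

include hM π_surjective hπ in
theorem finrank_ext_zero_add_rank :
    Module.finrank k (((Ext k (ModuleCat R) 0).obj (Opposite.op (trivialModule ε))).obj
      (trivialModule ε)) + ((M 0).map ε).rank = Fintype.card (ι 0) := by
  rw [finrank_ext_eq_finrank_homology hM hπ π_surjective, ← finrank_range_homComplex_d hM,
    finrank_homology_zero_add_finrank_range, finrank_homComplex_X]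

include hM π_surjective hπ in
theorem finrank_ext_succ_add_rank (n : ℕ) :
    Module.finrank k (((Ext k (ModuleCat R) (n + 1)).obj (Opposite.op (trivialModule ε))).obj
      (trivialModule ε)) + ((M n).map ε).rank + ((M (n + 1)).map ε).rank =
      Fintype.card (ι (n + 1)) := by
  rw [finrank_ext_eq_finrank_homology hM hπ π_surjective, ← finrank_range_homComplex_d hM,
    ← finrank_range_homComplex_d hM, finrank_homology_succ_add_finrank_range,
    finrank_homComplex_X]

end ExtOfMatrices

/-! ### Koszul complexes with bidiagonal differentials and their cones -/

section Bidiagonal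

variable {R : Type*} [Ring R]

/-- The `(n + 1) × n` matrix with `a` on the diagonal and `b` just below it. -/
def bidiagonal (n : ℕ) (a b : R) : Matrix (Fin (n + 1)) (Fin n) R :=
  Matrix.of fun i j => if i = j.castSucc then a else if i = j.succ then b else 0

theorem vecMul_bidiagonal_apply {n : ℕ} (a b : R) (f : Fin (n + 1) → R) (j : Fin n) :
    (f ᵥ* bidiagonal n a b) j = f j.castSucc * a + f j.succ * b := by
  have entry (i : Fin (n + 1)) : f i * bidiagonal n a b i j =
      (if i = j.castSucc then f i * a else 0) + (if i = j.succ then f i * b else 0) := by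
    have := j.castSucc_lt_succ.ne
    by_cases hi : i = j.castSucc <;> simp [bidiagonal, hi, this]
  simp [Matrix.vecMul, dotProduct, entry, Finset.sum_add_distrib]

/-- Generators `a`, `b` subject to `ab = ba = 0` and `a² + b² = 0` whose annihilators are as
small as these relations permit; this makes the bidiagonal complex on `a` and `b` exact. -/
structure IsKoszulPair (a b : R) : Prop where
  sq_add_sq : a * a + b * b = 0
  mul_a_eq_zero_iff (r : R) : r * a = 0 ↔ ∃ c, c * b = r
  mul_b_eq_zero_iff (r : R) : r * b = 0 ↔ ∃ c, c * a = r
  exists_of_mul_a_sq_eq_zero (r : R) : r * (a * a) = 0 → ∃ c d, c * a + d * b = r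

namespace IsKoszulPair

variable {a b : R} (h : IsKoszulPair a b)
include h

theorem symm : IsKoszulPair b a where
  sq_add_sq := by rw [add_comm, h.sq_add_sq]
  mul_a_eq_zero_iff := h.mul_b_eq_zero_iff
  mul_b_eq_zero_iff := h.mul_a_eq_zero_iff
  exists_of_mul_a_sq_eq_zero r hr := by
    rw [eq_neg_of_add_eq_zero_right h.sq_add_sq, mul_neg, neg_eq_zero] at hr
    obtain ⟨c, d, hcd⟩ := h.exists_of_mul_a_sq_eq_zero r hr
    exact ⟨d, c, by rw [add_comm, hcd]⟩

theorem a_mul_b : a * b = 0 := (h.mul_b_eq_zero_iff a).2 ⟨1, one_mul a⟩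

theorem bidiagonal_mul_bidiagonal (n : ℕ) : bidiagonal (n + 1) a b * bidiagonal n b a = 0 := by
  refine Matrix.ext_of_single_vecMul fun i => funext fun j => ?_
  rw [← Matrix.vecMul_vecMul, Matrix.vecMul_zero]
  simp only [vecMul_bidiagonal_apply, add_mul, mul_assoc, h.a_mul_b, h.symm.a_mul_b,
    mul_zero, zero_add, add_zero, Fin.succ_castSucc]
  rw [← mul_add, h.symm.sq_add_sq, mul_zero, Pi.zero_apply]

theorem exists_vecMul_bidiagonal_of_head (n : ℕ) (f : Fin (n + 1) → R)
    (hf : f ᵥ* bidiagonal n b a = 0) (c d : R) (hcd : c * a + d * b = f 0) :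
    ∃ f', f' 0 = c ∧ f' ᵥ* bidiagonal (n + 1) a b = f := by
  induction n generalizing c d with
  | zero =>
    refine ⟨![c, d], rfl, funext fun p => ?_⟩
    obtain rfl := Fin.fin_one_eq_zero p
    exact (vecMul_bidiagonal_apply a b _ 0).trans hcd
  | succ n ih =>
    have relation (p : Fin (n + 1)) : f p.castSucc * b + f p.succ * a = 0 := by
      rw [← vecMul_bidiagonal_apply, hf, Pi.zero_apply]
    -- As `b² = -a²`, what remains of `f 1` after subtracting `d * a` is a multiple of `b`.
    have remainder_mul_a : (f 1 - d * a) * a = 0 := by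
      have := relation 0
      rw [Fin.castSucc_zero, ← hcd, add_mul, mul_assoc, h.a_mul_b, mul_assoc,
        eq_neg_of_add_eq_zero_right h.sq_add_sq] at this
      rw [sub_mul, mul_assoc, ← this, Fin.succ_zero_eq_one]
      noncomm_ring
    obtain ⟨e, he⟩ := (h.mul_a_eq_zero_iff _).1 remainder_mul_a
    have tail_relation : Fin.tail f ᵥ* bidiagonal n b a = 0 := by
      ext p
      rw [vecMul_bidiagonal_apply]
      exact relation p.succ
    obtain ⟨f', hf'0, hf'⟩ := ih (Fin.tail f) tail_relation d e (by rw [he]; simp [Fin.tail])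
    refine ⟨Fin.cons c f', rfl, funext fun p => ?_⟩
    rw [vecMul_bidiagonal_apply, Fin.cons_succ]
    cases p using Fin.cases with
    | zero => rw [Fin.castSucc_zero, Fin.cons_zero, hf'0, hcd]
    | succ p =>
      rw [← Fin.succ_castSucc, Fin.cons_succ, ← vecMul_bidiagonal_apply, hf', Fin.tail]

theorem exact_bidiagonal (n : ℕ) : Function.Exact (bidiagonal (n + 2) a b).vecMulLinear
    (bidiagonal (n + 1) b a).vecMulLinear := by
  intro f
  simp only [Matrix.vecMulLinear_apply, Set.mem_range]
  constructor
  · intro hf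
    have head_relation : f 0 * b + f 1 * a = 0 := by
      simpa [vecMul_bidiagonal_apply] using congrFun hf 0
    have head_mul_sq : f 0 * (a * a) = 0 := by
      have := congrArg (· * b) head_relation
      simp only [add_mul, mul_assoc, h.a_mul_b, eq_neg_of_add_eq_zero_right h.sq_add_sq] at this
      simpa using this
    obtain ⟨c, d, hcd⟩ := h.exists_of_mul_a_sq_eq_zero _ head_mul_sq
    obtain ⟨f', -, hf'⟩ := h.exists_vecMul_bidiagonal_of_head (n + 1) f hf c d hcd
    exact ⟨f', hf'⟩
  · rintro ⟨f', rfl⟩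
    rw [Matrix.vecMul_vecMul, h.bidiagonal_mul_bidiagonal, Matrix.vecMul_zero]

end IsKoszulPair

end Bidiagonal

section Cone

variable {R : Type*} [Ring R] {ι₀ ι₁ ι₂ ι₃ : Type*} [Fintype ι₁] [Fintype ι₂] [Fintype ι₃]

theorem exact_vecMul_fromBlocks {d₃ : Matrix ι₃ ι₂ R} {d₂ : Matrix ι₂ ι₁ R} {d₁ : Matrix ι₁ ι₀ R}
    {m₂ : Matrix ι₂ ι₂ R} {m₁ : Matrix ι₁ ι₁ R}
    (exact_d : Function.Exact d₃.vecMulLinear d₂.vecMulLinear) (d_mul_d : d₂ * d₁ = 0)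
    (anticomm : m₂ * d₂ = -(d₂ * m₁))
    (lift : ∀ g, g ᵥ* d₁ = 0 → (∃ f, f ᵥ* d₂ = g ᵥ* m₁) → ∃ g', g' ᵥ* d₂ = g) :
    Function.Exact (Matrix.fromBlocks d₃ 0 m₂ d₂).vecMulLinear
      (Matrix.fromBlocks d₂ 0 m₁ d₁).vecMulLinear := by
  have d₃_mul_d₂ (f : ι₃ → R) : f ᵥ* d₃ ᵥ* d₂ = 0 := exact_d.apply_apply_eq_zero f
  intro z
  obtain ⟨f, g, rfl⟩ : ∃ f g, z = Sum.elim f g := ⟨_, _, (Sum.elim_comp_inl_inr z).symm⟩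
  simp only [Matrix.vecMulLinear_apply, Set.mem_range, Matrix.vecMul_fromBlocks,
    Sum.elim_comp_inl, Sum.elim_comp_inr, Matrix.vecMul_zero, zero_add]
  rw [← Sum.elim_zero_zero, Sum.elim_eq_iff]
  constructor
  · rintro ⟨hfg, hg⟩
    obtain ⟨g', rfl⟩ := lift g hg ⟨-f, by
      rw [Matrix.neg_vecMul, neg_eq_iff_add_eq_zero, hfg]⟩
    have boundary : (f - g' ᵥ* m₂) ᵥ* d₂ = 0 := by
      rw [Matrix.sub_vecMul, Matrix.vecMul_vecMul, anticomm, Matrix.vecMul_neg, sub_neg_eq_add,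
        ← Matrix.vecMul_vecMul, hfg]
    obtain ⟨f', hf'⟩ := (exact_d _).1 boundary
    rw [Matrix.vecMulLinear_apply] at hf'
    exact ⟨Sum.elim f' g', by simp [hf']⟩
  · rintro ⟨z, hz⟩
    obtain ⟨rfl, rfl⟩ := Sum.elim_eq_iff.1 hz
    refine ⟨?_, by rw [Matrix.vecMul_vecMul, d_mul_d, Matrix.vecMul_zero]⟩
    rw [Matrix.add_vecMul, d₃_mul_d₂, Matrix.vecMul_vecMul, Matrix.vecMul_vecMul, anticomm,
      Matrix.vecMul_neg, zero_add, neg_add_cancel]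

theorem rank_fromBlocks_zero_zero_zero {K m n o p : Type*} [Field K] [Finite m] [Finite n]
    [Fintype o] [Fintype p] (A : Matrix n p K) :
    (Matrix.fromBlocks (0 : Matrix m p K) (0 : Matrix m o K) A 0).rank = A.rank := by
  classical
  have := Fintype.ofFinite n
  apply le_antisymm
  · have factor : Matrix.fromBlocks (0 : Matrix m p K) (0 : Matrix m o K) A 0 =
        (Matrix.fromRows 0 1 : Matrix (m ⊕ n) n K) *
          (A * (Matrix.fromCols 1 0 : Matrix p (p ⊕ o) K)) := by
      ext (i | i) (j | j) <;> simp [Matrix.fromRows_mul, Matrix.mul_fromCols]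
    rw [factor]
    exact (Matrix.rank_mul_le_right _ _).trans (Matrix.rank_mul_le_left _ _)
  · exact Matrix.rank_submatrix_le
      (Matrix.fromBlocks (0 : Matrix m p K) (0 : Matrix m o K) A 0) Sum.inr Sum.inl

end Cone

/-! ### The resolution attached to an eigentriple -/

section EigenTriple

variable {R : Type*} [Ring R]

/-- Eigenvectors `u` and `v`, with eigenvalues `1` and `-1`, of the anticommutator with `x`,
subject to `uv = vu = 0` and `u² + v² = 0`. -/
structure IsEigenTriple (x u v : R) : Prop where
  anticomm_u : x * u + u * x = u
  anticomm_v : x * v + v * x = -v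
  u_mul_v : u * v = 0
  v_mul_u : v * u = 0
  sq_add_sq : u * u + v * v = 0

/-- The sequence `v, u, v, u, …`. -/
def alternate {α : Type*} (u v : α) (n : ℕ) : α := if Even n then v else u

theorem alternate_succ {α : Type*} (u v : α) (n : ℕ) : alternate u v (n + 1) = alternate v u n := by
  rcases Nat.even_or_odd n with hn | hn
  · simp [alternate, hn, Nat.even_add_one]
  · simp [alternate, hn, hn.add_one]

theorem IsKoszulPair.alternate {u v : R} (h : IsKoszulPair u v) (n : ℕ) :
    IsKoszulPair (alternate u v n) (alternate v u n) := by
  induction n with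
  | zero => exact h.symm
  | succ n ih => simpa only [alternate_succ] using ih.symm

/-- The `n`-th differential of the Koszul complex of `u` and `v`. The two entries change places
from one degree to the next, so that the relations `uv = vu = 0` and `u² + v² = 0` make
consecutive differentials compose to zero. -/
def koszulMatrix (u v : R) (n : ℕ) : Matrix (Fin (n + 1)) (Fin n) R :=
  bidiagonal n (alternate u v n) (alternate v u n)

theorem koszulMatrix_succ (u v : R) (n : ℕ) :
    koszulMatrix u v (n + 1) = bidiagonal (n + 1) (alternate v u n) (alternate u v n) := by
  rw [koszulMatrix, alternate_succ, alternate_succ]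

theorem IsKoszulPair.koszulMatrix_mul_koszulMatrix {u v : R} (h : IsKoszulPair u v) (n : ℕ) :
    koszulMatrix u v (n + 1) * koszulMatrix u v n = 0 := by
  rw [koszulMatrix_succ]
  exact (h.alternate n).symm.bidiagonal_mul_bidiagonal n

theorem IsKoszulPair.exact_koszulMatrix {u v : R} (h : IsKoszulPair u v) (n : ℕ) :
    Function.Exact (koszulMatrix u v (n + 2)).vecMulLinear
      (koszulMatrix u v (n + 1)).vecMulLinear := by
  rw [koszulMatrix_succ]
  exact (h.alternate (n + 1)).symm.exact_bidiagonal n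

/-- The weight of the `p`-th basis vector in degree `n` of the Koszul complex, defined so that
`x` minus the weight anticommutes with the differentials. -/
def weight (n p : ℕ) : ℤ := (-1) ^ n * (2 * p - n)

theorem weight_succ_add_weight (n p : ℕ) : weight (n + 1) p + weight n p = (-1) ^ n := by
  rw [weight, weight]
  push_cast
  ring

theorem weight_succ_succ_add_weight (n p : ℕ) :
    weight (n + 1) (p + 1) + weight n p = -(-1) ^ n := by
  rw [weight, weight]
  push_cast
  ring

theorem weight_eq_zero_iff (n p : ℕ) : weight n p = 0 ↔ n = 2 * p := by
  rw [weight, mul_eq_zero_iff_left (pow_ne_zero n (by simp))]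
  omega

/-- Right multiplication by `x` minus the weight, in degree `n` of the Koszul complex. -/
def weightMatrix (x : R) (n : ℕ) : Matrix (Fin (n + 1)) (Fin (n + 1)) R :=
  Matrix.diagonal fun p => x - weight n p

namespace IsEigenTriple

variable {x u v : R} (h : IsEigenTriple x u v)
include h

theorem commute_sq : Commute x (u * u) := by
  have swap : x * u = u - u * x := eq_sub_of_add_eq h.anticomm_u
  rw [Commute, SemiconjBy, ← mul_assoc, swap, sub_mul, mul_assoc u x, swap]
  noncomm_ring

theorem u_cube : u * (u * u) = 0 := by
  rw [eq_neg_of_add_eq_zero_left h.sq_add_sq, mul_neg, ← mul_assoc, h.u_mul_v, zero_mul,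
    neg_zero]

theorem anticomm_alternate (n : ℕ) :
    x * alternate v u n + alternate v u n * x = (-1) ^ n * alternate v u n ∧
      x * alternate u v n + alternate u v n * x = -(-1) ^ n * alternate u v n := by
  induction n with
  | zero => simp [alternate, h.anticomm_u, h.anticomm_v]
  | succ n ih =>
    rw [alternate_succ, alternate_succ, pow_succ, mul_neg_one, neg_neg]
    exact ih.symm

theorem weightMatrix_mul_koszulMatrix (n : ℕ) :
    weightMatrix x (n + 1) * koszulMatrix u v (n + 1) =
      -(koszulMatrix u v (n + 1) * weightMatrix x n) := by
  have shift {s : R} {l l' c : ℤ} (hs : x * s + s * x = c * s) (hl : l + l' = c) :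
      (x - l) * s = -(s * (x - l')) := by
    rw [← sub_eq_zero, ← sub_eq_zero.2 hs, ← hl, Int.cast_add, sub_mul, mul_sub,
      ← (Int.cast_commute l' s).eq]
    noncomm_ring
  ext p q
  simp only [weightMatrix, Matrix.neg_apply, Matrix.diagonal_mul, Matrix.mul_diagonal,
    koszulMatrix_succ, bidiagonal, Matrix.of_apply]
  split_ifs with hp hp'
  · exact shift (c := (-1) ^ n) (by simpa using (h.anticomm_alternate n).1)
      (by simpa [hp] using weight_succ_add_weight n q)
  · exact shift (c := -(-1) ^ n) (by simpa using (h.anticomm_alternate n).2)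
      (by simpa [hp'] using weight_succ_succ_add_weight n q)
  · simp

end IsEigenTriple

/-- The differentials of the mapping cone of `weightMatrix` on the Koszul complex. -/
def resolutionMatrix (x u v : R) (n : ℕ) :
    Matrix (Fin (n + 2) ⊕ Fin (n + 1)) (Fin (n + 1) ⊕ Fin n) R :=
  Matrix.fromBlocks (koszulMatrix u v (n + 1)) 0 (weightMatrix x n) (koszulMatrix u v n)

theorem exists_vecMul_koszulMatrix_one_iff (u v : R) (g : Fin 1 → R) :
    (∃ f, f ᵥ* koszulMatrix u v 1 = g) ↔ ∃ c d, c * u + d * v = g 0 := by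
  have apply_zero (f : Fin 2 → R) : (f ᵥ* koszulMatrix u v 1) 0 = f 0 * u + f 1 * v :=
    vecMul_bidiagonal_apply _ _ f 0
  constructor
  · rintro ⟨f, rfl⟩
    exact ⟨f 0, f 1, (apply_zero f).symm⟩
  · rintro ⟨c, d, hcd⟩
    refine ⟨![c, d], funext fun p => ?_⟩
    obtain rfl := Fin.fin_one_eq_zero p
    exact (apply_zero _).trans hcd

variable {x u v : R} (h : IsEigenTriple x u v) (huv : IsKoszulPair u v) (hx : IsRightRegular x)
include h huv hx

theorem exists_combination_of_mul_x {r : R} (hr : ∃ c d, c * u + d * v = r * x) :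
    ∃ c d, c * u + d * v = r := by
  obtain ⟨c, d, hcd⟩ := hr
  apply huv.exists_of_mul_a_sq_eq_zero
  apply hx.eq_iff.1
  calc r * (u * u) * x = (c * u + d * v) * (u * u) := by
        rw [hcd, mul_assoc r x, h.commute_sq.eq, mul_assoc r]
    _ = 0 * x := by
        rw [add_mul, mul_assoc, h.u_cube, mul_assoc, ← mul_assoc v, h.v_mul_u]
        simp

theorem exact_resolutionMatrix (n : ℕ) :
    Function.Exact (resolutionMatrix x u v (n + 1)).vecMulLinear
      (resolutionMatrix x u v n).vecMulLinear := by
  refine exact_vecMul_fromBlocks (huv.exact_koszulMatrix n)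
    (huv.koszulMatrix_mul_koszulMatrix n) (h.weightMatrix_mul_koszulMatrix n) ?_
  intro g hg hgx
  cases n with
  | zero =>
    rw [exists_vecMul_koszulMatrix_one_iff] at hgx ⊢
    refine exists_combination_of_mul_x h huv hx ?_
    simpa [weightMatrix, weight, Matrix.vecMul_diagonal] using hgx
  | succ n => exact (huv.exact_koszulMatrix n g).1 hg

end EigenTriple

section EigenTripleExt

theorem card_weight_ne_zero_add (n : ℕ) :
    Fintype.card {p : Fin (n + 1) // weight n p ≠ 0} + (if Even n then 1 else 0) = n + 1 := by
  have card_weight_eq_zero :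
      Fintype.card {p : Fin (n + 1) // weight n p = 0} = if Even n then 1 else 0 := by
    simp only [weight_eq_zero_iff]
    split_ifs with hn
    · obtain ⟨m, rfl⟩ := hn
      rw [Fintype.card_eq_one_iff]
      exact ⟨⟨⟨m, by omega⟩, (two_mul m).symm⟩, fun p => Subtype.ext (Fin.ext (by grind))⟩
    · rw [Fintype.card_eq_zero_iff]
      exact ⟨fun p => hn (p.2 ▸ even_two_mul _)⟩
  rw [← card_weight_eq_zero, add_comm, Fintype.card_subtype_compl, Nat.add_sub_cancel',
    Fintype.card_fin]
  exact Fintype.card_subtype_le _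

variable {k R : Type u} [Field k] [Ring R] [Algebra k R] {ε : R →ₐ[k] k} {x u v : R}

theorem map_resolutionMatrix (hx : ε x = 0) (hu : ε u = 0) (hv : ε v = 0) (n : ℕ) :
    (resolutionMatrix x u v n).map ε =
      Matrix.fromBlocks 0 0 (Matrix.diagonal fun p : Fin (n + 1) => -(weight n p : k)) 0 := by
  have map_koszulMatrix (m : ℕ) : (koszulMatrix u v m).map ε = 0 := by
    ext p q
    simp [koszulMatrix, bidiagonal, alternate, apply_ite ε, hu, hv]
  have map_weightMatrix : (weightMatrix x n).map ε =
      Matrix.diagonal fun p : Fin (n + 1) => -(weight n p : k) := by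
    simp [weightMatrix, Matrix.diagonal_map, hx]
  rw [resolutionMatrix, Matrix.fromBlocks_map, map_koszulMatrix, map_koszulMatrix,
    map_weightMatrix, Matrix.map_zero _ (map_zero ε)]

theorem rank_map_resolutionMatrix_add [CharZero k] (hx : ε x = 0) (hu : ε u = 0) (hv : ε v = 0)
    (n : ℕ) :
    ((resolutionMatrix x u v n).map ε).rank + (if Even n then 1 else 0) = n + 1 := by
  classical
  rw [map_resolutionMatrix hx hu hv, rank_fromBlocks_zero_zero_zero, Matrix.rank_diagonal]
  simpa using card_weight_ne_zero_add n

variable (ε) in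
/-- The augmentation `R → k` on the degree zero term of the resolution, written as a free module
on `Fin 1 ⊕ Fin 0`. -/
noncomputable def resolutionAugmentation : (Fin 1 ⊕ Fin 0 → R) →ₗ[R] trivialModule ε :=
  LinearMap.toSpanSingleton R (trivialModule ε) ((trivialModuleEquiv ε).symm 1) ∘ₗ
    LinearMap.proj (Sum.inl 0)

theorem trivialModuleEquiv_resolutionAugmentation (f : Fin 1 ⊕ Fin 0 → R) :
    trivialModuleEquiv ε (resolutionAugmentation ε f) = ε (f (Sum.inl 0)) := by
  simp [resolutionAugmentation, trivialModuleEquiv_smul]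

theorem resolutionAugmentation_surjective : Function.Surjective (resolutionAugmentation ε) := by
  intro z
  refine ⟨fun _ => algebraMap k R (trivialModuleEquiv ε z), (trivialModuleEquiv ε).injective ?_⟩
  rw [trivialModuleEquiv_resolutionAugmentation]
  exact ε.commutes _

theorem exact_resolutionAugmentation
    (hε : ∀ r, ε r = 0 ↔ ∃ a b c, a * x + b * u + c * v = r) :
    Function.Exact (resolutionMatrix x u v 0).vecMulLinear (resolutionAugmentation ε) := by
  have apply_inl (f : Fin 2 ⊕ Fin 1 → R) : (f ᵥ* resolutionMatrix x u v 0) (Sum.inl 0) =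
      f (Sum.inr 0) * x + f (Sum.inl 0) * u + f (Sum.inl 1) * v := by
    rw [resolutionMatrix, Matrix.vecMul_fromBlocks, Sum.elim_inl, Pi.add_apply, koszulMatrix,
      vecMul_bidiagonal_apply, weightMatrix, Matrix.vecMul_diagonal]
    simp [alternate, weight, add_comm, add_assoc, add_left_comm]
  intro g
  rw [← (trivialModuleEquiv ε).map_eq_zero_iff, trivialModuleEquiv_resolutionAugmentation, hε]
  constructor
  · rintro ⟨a, b, c, habc⟩
    refine ⟨Sum.elim ![b, c] ![a], funext ?_⟩
    rintro (p | p)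
    · obtain rfl := Fin.fin_one_eq_zero p
      exact (apply_inl _).trans habc
    · exact p.elim0
  · rintro ⟨f, rfl⟩
    exact ⟨_, _, _, (apply_inl f).symm⟩

theorem finrank_ext_trivialModule_eq_one [CharZero k] (h : IsEigenTriple x u v)
    (huv : IsKoszulPair u v) (hx : IsRightRegular x)
    (hε : ∀ r, ε r = 0 ↔ ∃ a b c, a * x + b * u + c * v = r) (n : ℕ) :
    Module.finrank k (((Ext k (ModuleCat R) n).obj (Opposite.op (trivialModule ε))).obj
      (trivialModule ε)) = 1 := by
  have rank_add := rank_map_resolutionMatrix_add (ε := ε) ((hε x).2 ⟨1, 0, 0, by simp⟩)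
    ((hε u).2 ⟨0, 1, 0, by simp⟩) ((hε v).2 ⟨0, 0, 1, by simp⟩)
  have hM := exact_resolutionMatrix h huv hx
  have hπ := exact_resolutionAugmentation hε
  cases n with
  | zero =>
    have euler := finrank_ext_zero_add_rank (ι := fun n => Fin (n + 1) ⊕ Fin n) hM hπ
      resolutionAugmentation_surjective
    have rank_zero := rank_add 0
    rw [if_pos Even.zero] at rank_zero
    simp only [Fintype.card_sum, Fintype.card_fin] at euler
    omega
  | succ n =>
    have euler := finrank_ext_succ_add_rank (ι := fun n => Fin (n + 1) ⊕ Fin n) hM hπ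
      resolutionAugmentation_surjective n
    have rank_n := rank_add n
    have rank_succ := rank_add (n + 1)
    simp only [Fintype.card_sum, Fintype.card_fin] at euler
    simp only [Nat.even_add_one] at rank_succ
    split_ifs at rank_n rank_succ <;> omega

end EigenTripleExt

/-! ### Normal forms -/

section NormalForm

open Polynomial

variable {k A : Type*} [CommRing k] [Ring A] [Algebra k A]

/-- The element `p₀(x) + p₁(x)u + p₂(x)v + p₃(x)u²` with the coefficients `p`. -/
noncomputable def normalForm (x u v : A) : (Fin 4 → k[X]) →ₗ[k] A where
  toFun p := aeval x (p 0) + aeval x (p 1) * u + aeval x (p 2) * v + aeval x (p 3) * (u * u)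
  map_add' p q := by
    simp only [Pi.add_apply, map_add, add_mul]
    abel
  map_smul' c p := by simp

theorem normalForm_apply (x u v : A) (p : Fin 4 → k[X]) : normalForm x u v p =
    aeval x (p 0) + aeval x (p 1) * u + aeval x (p 2) * v + aeval x (p 3) * (u * u) := rfl

theorem map_normalForm {B : Type*} [Ring B] [Algebra k B] (φ : A →ₐ[k] B) (x u v : A)
    (p : Fin 4 → k[X]) : φ (normalForm x u v p) = normalForm (φ x) (φ u) (φ v) p := by
  simp only [normalForm_apply, map_add, map_mul, aeval_algHom_apply]

namespace IsEigenTriple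

variable {x u v : A} (h : IsEigenTriple x u v)
include h

theorem normalForm_mul_x (p : Fin 4 → k[X]) : normalForm x u v p * x =
    normalForm x u v ![p 0 * X, p 1 * (1 - X), p 2 * (-1 - X), p 3 * X] := by
  have u_mul_x : u * x = (1 - x) * u := by
    rw [sub_mul, one_mul]
    exact eq_sub_of_add_eq' h.anticomm_u
  have v_mul_x : v * x = (-1 - x) * v := by
    rw [sub_mul, neg_one_mul]
    exact eq_sub_of_add_eq' h.anticomm_v
  rw [normalForm_apply, add_mul, add_mul, add_mul, mul_assoc _ u x, u_mul_x, mul_assoc _ v x,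
    v_mul_x, mul_assoc _ (u * u) x, ← h.commute_sq.eq]
  simp [normalForm_apply, mul_assoc]

theorem normalForm_mul_u (p : Fin 4 → k[X]) :
    normalForm x u v p * u = normalForm x u v ![0, p 0, 0, p 1] := by
  simp [normalForm_apply, add_mul, mul_assoc, h.v_mul_u, h.u_cube]

theorem normalForm_mul_v (p : Fin 4 → k[X]) :
    normalForm x u v p * v = normalForm x u v ![0, 0, p 0, -p 2] := by
  simp [normalForm_apply, add_mul, mul_assoc, h.u_mul_v,
    eq_neg_of_add_eq_zero_right h.sq_add_sq]

theorem normalForm_mul_u_sq (p : Fin 4 → k[X]) :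
    normalForm x u v p * (u * u) = normalForm x u v ![0, 0, 0, p 0] := by
  rw [← mul_assoc, h.normalForm_mul_u, h.normalForm_mul_u]
  rfl

theorem normalForm_surjective (adjoin_eq_top : Algebra.adjoin k {x, u, v} = ⊤) :
    Function.Surjective (normalForm (k := k) x u v) := by
  suffices mul_mem : ∀ a ∈ Algebra.adjoin k {x, u, v}, ∀ p : Fin 4 → k[X],
      ∃ q, normalForm x u v q = normalForm x u v p * a by
    intro a
    obtain ⟨q, hq⟩ := mul_mem a (adjoin_eq_top ▸ Algebra.mem_top) ![1, 0, 0, 0]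
    exact ⟨q, by simpa [normalForm_apply] using hq⟩
  intro a ha
  induction ha using Algebra.adjoin_induction with
  | mem a ha =>
    intro p
    rcases ha with rfl | rfl | rfl
    · exact ⟨_, (h.normalForm_mul_x p).symm⟩
    · exact ⟨_, (h.normalForm_mul_u p).symm⟩
    · exact ⟨_, (h.normalForm_mul_v p).symm⟩
  | algebraMap c =>
    exact fun p => ⟨c • p, by rw [map_smul, Algebra.smul_def, Algebra.commutes]⟩
  | add a b _ _ iha ihb =>
    intro p
    obtain ⟨⟨q, hq⟩, ⟨q', hq'⟩⟩ := And.intro (iha p) (ihb p)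
    exact ⟨q + q', by rw [map_add, hq, hq', mul_add]⟩
  | mul a b _ _ iha ihb =>
    intro p
    obtain ⟨q, hq⟩ := iha p
    obtain ⟨q', hq'⟩ := ihb q
    exact ⟨q', by rw [hq', hq, mul_assoc]⟩

theorem isRightRegular_of_normalForm_bijective [IsDomain k]
    (hbij : Function.Bijective (normalForm (k := k) x u v)) : IsRightRegular x := by
  rw [isRightRegular_iff_left_eq_zero_of_mul]
  intro r hr
  obtain ⟨p, rfl⟩ := hbij.2 r
  have one_sub_X_ne_zero : (1 - X : k[X]) ≠ 0 := by
    simpa using neg_ne_zero.2 (X_sub_C_ne_zero (1 : k))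
  have neg_one_sub_X_ne_zero : (-1 - X : k[X]) ≠ 0 := by
    simpa [sub_eq_add_neg, add_comm] using neg_ne_zero.2 (X_add_C_ne_zero (1 : k))
  rw [h.normalForm_mul_x, map_eq_zero_iff _ hbij.1] at hr
  rw [map_eq_zero_iff _ hbij.1]
  ext1 i
  have hi := congrFun hr i
  fin_cases i <;> simpa [X_ne_zero, one_sub_X_ne_zero, neg_one_sub_X_ne_zero] using hi

theorem isKoszulPair_of_normalForm_bijective
    (hbij : Function.Bijective (normalForm (k := k) x u v)) : IsKoszulPair u v where
  sq_add_sq := h.sq_add_sq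
  mul_a_eq_zero_iff r := by
    refine ⟨fun hr => ?_, ?_⟩
    · obtain ⟨p, rfl⟩ := hbij.2 r
      rw [h.normalForm_mul_u, map_eq_zero_iff _ hbij.1] at hr
      have hp0 : p 0 = 0 := congrFun hr 1
      have hp1 : p 1 = 0 := congrFun hr 3
      refine ⟨normalForm x u v ![p 2, 0, -p 3, 0], ?_⟩
      rw [h.normalForm_mul_v]
      simp [normalForm_apply, hp0, hp1]
    · rintro ⟨c, rfl⟩
      rw [mul_assoc, h.v_mul_u, mul_zero]
  mul_b_eq_zero_iff r := by
    refine ⟨fun hr => ?_, ?_⟩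
    · obtain ⟨p, rfl⟩ := hbij.2 r
      rw [h.normalForm_mul_v, map_eq_zero_iff _ hbij.1] at hr
      have hp0 : p 0 = 0 := congrFun hr 2
      have hp2 : p 2 = 0 := neg_eq_zero.1 (congrFun hr 3)
      refine ⟨normalForm x u v ![p 1, p 3, 0, 0], ?_⟩
      rw [h.normalForm_mul_u]
      simp [normalForm_apply, hp0, hp2]
    · rintro ⟨c, rfl⟩
      rw [mul_assoc, h.u_mul_v, mul_zero]
  exists_of_mul_a_sq_eq_zero r hr := by
    obtain ⟨p, rfl⟩ := hbij.2 r
    rw [h.normalForm_mul_u_sq, map_eq_zero_iff _ hbij.1] at hr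
    have hp0 : p 0 = 0 := congrFun hr 3
    refine ⟨normalForm x u v ![p 1, p 3, 0, 0], normalForm x u v ![p 2, 0, 0, 0], ?_⟩
    rw [h.normalForm_mul_u, h.normalForm_mul_v]
    simp [normalForm_apply, hp0, add_right_comm]

end IsEigenTriple

theorem augmentation_eq_zero_iff {x u v : A}
    (hsurj : Function.Surjective (normalForm (k := k) x u v))
    {ε : A →ₐ[k] k} (hx : ε x = 0) (hu : ε u = 0) (hv : ε v = 0) (r : A) :
    ε r = 0 ↔ ∃ a b c, a * x + b * u + c * v = r := by
  constructor
  · intro hr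
    obtain ⟨p, rfl⟩ := hsurj r
    have X_dvd : X ∣ p 0 := by
      rw [X_dvd_iff, coeff_zero_eq_aeval_zero]
      rw [map_normalForm, hx, hu, hv] at hr
      simpa [normalForm_apply] using hr
    obtain ⟨q, hq⟩ := X_dvd
    refine ⟨aeval x q, aeval x (p 1) + aeval x (p 3) * u, aeval x (p 2), ?_⟩
    rw [normalForm_apply, hq, mul_comm X q, map_mul, aeval_X, add_mul, mul_assoc _ u u]
    abel
  · rintro ⟨a, b, c, rfl⟩
    simp [hx, hu, hv]

end NormalForm

section RegularRepresentation

open Polynomial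

variable (k : Type*) [CommRing k]

/-- Right multiplication by `x` in the coordinates of `normalForm`, acting on row vectors. -/
noncomputable def representationX : Matrix (Fin 4) (Fin 4) k[X] :=
  Matrix.diagonal ![X, 1 - X, -1 - X, X]

/-- Right multiplication by `u` in the coordinates of `normalForm`, acting on row vectors. -/
noncomputable def representationU : Matrix (Fin 4) (Fin 4) k[X] :=
  !![0, 1, 0, 0; 0, 0, 0, 1; 0, 0, 0, 0; 0, 0, 0, 0]

/-- Right multiplication by `v` in the coordinates of `normalForm`, acting on row vectors. -/
noncomputable def representationV : Matrix (Fin 4) (Fin 4) k[X] :=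
  !![0, 0, 1, 0; 0, 0, 0, 0; 0, 0, 0, -1; 0, 0, 0, 0]

theorem isEigenTriple_representation :
    IsEigenTriple (representationX k) (representationU k) (representationV k) := by
  constructor <;> ext1 i j <;> fin_cases i <;> fin_cases j <;>
    simp [representationX, representationU, representationV, Matrix.mul_apply,
      Fin.sum_univ_four, Matrix.vecMul_diagonal]

variable {k}

theorem normalForm_representation_row_zero (p : Fin 4 → k[X]) :
    (normalForm (representationX k) (representationU k) (representationV k) p).row 0 = p := by
  have aeval_representationX (q : k[X]) : aeval (representationX k) q =
      Matrix.diagonal fun i => aeval (![X, 1 - X, -1 - X, X] i) q := by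
    refine (aeval_algHom_apply (Matrix.diagonalAlgHom k) ![X, 1 - X, -1 - X, X] q).trans ?_
    rw [aeval_pi_apply]
    rfl
  ext1 j
  fin_cases j <;>
    simp [normalForm_apply, aeval_representationX, representationU, representationV,
      Matrix.mul_apply, Fin.sum_univ_four]

theorem normalForm_injective_of_representation {A : Type*} [Ring A] [Algebra k A] {x u v : A}
    (ρ : A →ₐ[k] Matrix (Fin 4) (Fin 4) k[X]) (hx : ρ x = representationX k)
    (hu : ρ u = representationU k) (hv : ρ v = representationV k) :
    Function.Injective (normalForm (k := k) x u v) := by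
  refine Function.LeftInverse.injective (g := fun r => (ρ r).row 0) fun p => ?_
  simp only [map_normalForm, hx, hu, hv, normalForm_representation_row_zero]

end RegularRepresentation

/-! ### The algebra of the theorem -/

section Algebra

/-- The generators `e₁, e₂, e₃` of the algebra, numbered from `0`. -/
noncomputable def generator (i : Fin 3) : RingQuot CRel := RingQuot.mkAlgHom ℂ CRel (ι ℂ i)

theorem isEigenTriple_generator :
    IsEigenTriple (generator 0) (generator 1 + generator 2) (generator 1 - generator 2) := by
  have anticomm_one : generator 0 * generator 1 + generator 1 * generator 0 = generator 2 := by
    simpa [generator] using RingQuot.mkAlgHom_rel ℂ CRel.r12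
  have anticomm_two : generator 0 * generator 2 + generator 2 * generator 0 = generator 1 := by
    simpa [generator] using RingQuot.mkAlgHom_rel ℂ CRel.r13
  have comm : generator 1 * generator 2 = generator 2 * generator 1 := by
    simpa [generator, sub_eq_zero] using RingQuot.mkAlgHom_rel ℂ CRel.r23
  have sq_one : generator 1 * generator 1 = 0 := by
    simpa [generator] using RingQuot.mkAlgHom_rel ℂ CRel.r22
  have sq_two : generator 2 * generator 2 = 0 := by
    simpa [generator] using RingQuot.mkAlgHom_rel ℂ CRel.r33
  constructor
  · rw [mul_add, add_mul, add_add_add_comm, anticomm_one, anticomm_two, add_comm]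
  · rw [mul_sub, sub_mul, sub_add_sub_comm, anticomm_one, anticomm_two, neg_sub]
  all_goals simp [mul_add, add_mul, mul_sub, sub_mul, comm, sq_one, sq_two]

theorem adjoin_generator_eq_top :
    Algebra.adjoin ℂ {generator 0, generator 1 + generator 2, generator 1 - generator 2} = ⊤ := by
  set S := Algebra.adjoin ℂ {generator 0, generator 1 + generator 2, generator 1 - generator 2}
  have mem_x : generator 0 ∈ S := Algebra.subset_adjoin (by simp)
  have mem_u : generator 1 + generator 2 ∈ S := Algebra.subset_adjoin (by simp)
  have mem_v : generator 1 - generator 2 ∈ S := Algebra.subset_adjoin (by simp)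
  have generator_mem (i : Fin 3) : generator i ∈ S := by
    fin_cases i
    · exact mem_x
    · convert S.smul_mem (S.add_mem mem_u mem_v) (2⁻¹ : ℂ)
      simp [← two_smul ℂ]
    · convert S.smul_mem (S.sub_mem mem_u mem_v) (2⁻¹ : ℂ)
      simp [← two_smul ℂ]
  rw [eq_top_iff, ← (AlgHom.range_eq_top _).2 (RingQuot.mkAlgHom_surjective ℂ CRel),
    ← Algebra.map_top, ← FreeAlgebra.adjoin_range_ι, AlgHom.map_adjoin, Algebra.adjoin_le_iff]
  rintro _ ⟨_, ⟨i, rfl⟩, rfl⟩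
  exact generator_mem i

theorem IsEigenTriple.exists_algHom {A : Type*} [Ring A] [Algebra ℂ A] {x u v : A}
    (h : IsEigenTriple x u v) : ∃ φ : RingQuot CRel →ₐ[ℂ] A, φ (generator 0) = x ∧
      φ (generator 1 + generator 2) = u ∧ φ (generator 1 - generator 2) = v := by
  have anticomm_add : x * (u + v) + (u + v) * x = u - v := by
    rw [mul_add, add_mul, add_add_add_comm, h.anticomm_u, h.anticomm_v, sub_eq_add_neg]
  have anticomm_sub : x * (u - v) + (u - v) * x = u + v := by
    rw [mul_sub, sub_mul, sub_add_sub_comm, h.anticomm_u, h.anticomm_v, sub_neg_eq_add]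
  have comm : (u + v) * (u - v) = (u - v) * (u + v) := by
    simp [mul_add, add_mul, h.u_mul_v, h.v_mul_u, sub_eq_add_neg]
  have sq_add : (u + v) * (u + v) = 0 := by
    simp [mul_add, add_mul, h.u_mul_v, h.v_mul_u, h.sq_add_sq]
  have sq_sub : (u - v) * (u - v) = 0 := by
    simp [mul_sub, sub_mul, h.u_mul_v, h.v_mul_u, h.sq_add_sq]
  let f : FreeAlgebra ℂ (Fin 3) →ₐ[ℂ] A :=
    FreeAlgebra.lift ℂ ![x, (2⁻¹ : ℂ) • (u + v), (2⁻¹ : ℂ) • (u - v)]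
  have hf : ∀ ⦃a b⦄, CRel a b → f a = f b := by
    rintro _ _ (_ | _ | _ | _ | _) <;>
      simp [f, ← smul_add, anticomm_add, anticomm_sub, comm, sq_add, sq_sub]
  have apply_generator (i : Fin 3) : RingQuot.liftAlgHom ℂ ⟨f, hf⟩ (generator i) =
      ![x, (2⁻¹ : ℂ) • (u + v), (2⁻¹ : ℂ) • (u - v)] i := by
    rw [generator, RingQuot.liftAlgHom_mkAlgHom_apply, FreeAlgebra.lift_ι_apply]
  refine ⟨RingQuot.liftAlgHom ℂ ⟨f, hf⟩, apply_generator 0, ?_, ?_⟩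
  · rw [map_add, apply_generator, apply_generator]
    simp [← smul_add, ← two_smul ℂ]
  · rw [map_sub, apply_generator, apply_generator]
    simp only [Matrix.cons_val, ← smul_sub]
    simp [← two_smul ℂ]

theorem normalForm_generator_bijective : Function.Bijective (normalForm (k := ℂ)
    (generator 0) (generator 1 + generator 2) (generator 1 - generator 2)) := by
  obtain ⟨ρ, hx, hu, hv⟩ := (isEigenTriple_representation ℂ).exists_algHom
  exact ⟨normalForm_injective_of_representation ρ hx hu hv,
    isEigenTriple_generator.normalForm_surjective adjoin_generator_eq_top⟩

theorem extDim_eq_one (ε : RingQuot CRel →ₐ[ℂ] ℂ) (hε : ∀ i, ε (generator i) = 0) (n : ℕ) :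
    extDim (RingQuot CRel) ε n = 1 := by
  have h := isEigenTriple_generator
  have hbij := normalForm_generator_bijective
  exact finrank_ext_trivialModule_eq_one h (h.isKoszulPair_of_normalForm_bijective hbij)
    (h.isRightRegular_of_normalForm_bijective hbij)
    (augmentation_eq_zero_iff hbij.2 (hε 0) (by simp [hε]) (by simp [hε])) n

end Algebra

end ColorLie

theorem betti_numbers (ε : RingQuot CRel →ₐ[ℂ] ℂ)
    (hε : ∀ i : Fin 3, ε (RingQuot.mkAlgHom ℂ CRel (ι ℂ i)) = 0) :
    (∀ n : ℕ, extDim (RingQuot CRel) ε n = 1) ∧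
    (PowerSeries.mk fun n => (extDim (RingQuot CRel) ε n : ℚ)) * (1 - PowerSeries.X) =
      1 := by
  have extDim_eq := ColorLie.extDim_eq_one ε hε
  refine ⟨extDim_eq, ?_⟩
  simp only [extDim_eq, Nat.cast_one]
  exact PowerSeries.mk_one_mul_one_sub_eq_one ℚ
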